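/- arXiv:2406.14788 — 3 statements merged into one kernel-verified Lean document; each statement's English description precedes it below -/
import Mathlib

section
/- For every x ∈ Q_ρ and every ε > 0, a_ε(d(x)/ε; x) = ε^{2s} I_n^s[φ(d(·)/ε)](x) − C_{n,s} I_1^s[φ](d(x)/ε), where I_m^s u(x) = P.V. ∫_{ℝ^m} (u(x+y) − u(x)) |y|^{-(m+2s)} dy is the fractional Laplacian (up to constant) in dimension m, and C_{n,s} = ∫_{ℝ^{n-1}} (|y|² + 1)^{-(n+2s)/2} dy. -/
/-!
Write `p = n + 2s`, `ξ = d x / ε`, `g y = φ (d (x + y) / ε)`, `k z = φ (ξ + ⟪∇d x, z⟫)`.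

Every principal value is turned into an absolutely convergent integral by symmetrization: the
truncation region `{δ < ‖y‖}` is invariant under `y ↦ -y`, so
`∫_{δ < ‖y‖} (g y - g 0) / ‖y‖ ^ p = ½ ∫_{δ < ‖y‖} (g y + g (-y) - 2 g 0) / ‖y‖ ^ p`, and the last
integrand is integrable on the whole space, since a `C²` function vanishing to first order at `0`
is `O(‖y‖²)` (`quadratic_bound`, `integrable_div_norm_rpow`, `tendsto_principalValue`).

The integrand of `a_ε` is `(g (ε • z) - k z) / ‖z‖ ^ p`. The two profiles have the same value and
the same derivative at `0`, so this is integrable as well, and its symmetrization splits into the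
symmetrized integrals of `g (ε • ·)` and of `k`. Scaling turns the first into `ε ^ (2 s)` times that
of `g` (`integral_symm_scale`). In the second, `k` depends only on `⟪∇d x, z⟫` and `‖∇d x‖ = 1`;
an isometry onto `ℝ × ℝⁿ⁻¹` and Fubini give `C_{n,s}` times the one-dimensional integral
(`integral_ridge`, `integral_slice`).

Since `d` is continuous on the whole space (`continuous_signedDist`), the tubular neighbourhood is
open, which makes `d` genuinely `C²` at `x`, and the profiles are measurable.
-/

open MeasureTheory Real Set Filter Metric
open scoped Topology RealInnerProductSpace NNReal ENNReal

/-! ### Regularity -/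

/-- The signed distance is continuous: both branches vanish on the frontier. -/
lemma continuous_signedDist {E : Type*} [NormedAddCommGroup E] (Ω : Set E) (d : E → ℝ)
    (hd : ∀ x : E, (x ∈ Ω → d x = infDist x (frontier Ω)) ∧
      (x ∉ Ω → d x = -infDist x (frontier Ω))) : Continuous d := by
  classical
  have h : d = Ω.piecewise (fun x => infDist x (frontier Ω)) (fun x => -infDist x (frontier Ω)) := by
    ext x
    by_cases hx : x ∈ Ω
    · simp [hx, (hd x).1 hx]
    · simp [hx, (hd x).2 hx]
  rw [h]
  refine Continuous.piecewise (fun a ha => ?_) (continuous_infDist_pt _)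
    (continuous_infDist_pt _).neg
  simp [infDist_zero_of_mem ha]

/-- A `C²` function vanishing to first order at `0` is `O(‖z‖²)`: its derivative is `O(‖z‖)`,
and the mean value inequality applies on the ball of radius `‖z‖`. -/
lemma quadratic_bound {E : Type*} [NormedAddCommGroup E] [NormedSpace ℝ E] {f : E → ℝ}
    (hf : ContDiffAt ℝ 2 f 0) (h0 : f 0 = 0) (h1 : fderiv ℝ f 0 = 0) :
    ∃ C r : ℝ, 0 ≤ C ∧ 0 < r ∧ ∀ z, ‖z‖ < r → |f z| ≤ C * ‖z‖ ^ 2 := by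
  have hd : DifferentiableAt ℝ (fderiv ℝ f) 0 :=
    (hf.fderiv_right (m := 1) (by norm_num)).differentiableAt (by norm_num)
  have hO := hd.isBigO_sub
  simp only [h1, sub_zero] at hO
  obtain ⟨C, hC⟩ := hO.bound
  have hev : ∀ᶠ z in 𝓝 (0 : E), DifferentiableAt ℝ f z :=
    (hf.eventually (by simp)).mono fun z hz => hz.differentiableAt (by norm_num)
  obtain ⟨r, hr, hball⟩ := Metric.eventually_nhds_iff.1 (hC.and hev)
  have hb : ∀ w : E, ‖w‖ < r → ‖fderiv ℝ f w‖ ≤ C * ‖w‖ ∧ DifferentiableAt ℝ f w :=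
    fun w hw => hball (by simpa using hw)
  refine ⟨|C|, r, abs_nonneg C, hr, fun z hz => ?_⟩
  have hw : ∀ w ∈ closedBall (0 : E) ‖z‖, ‖w‖ ≤ ‖z‖ := fun w hw => by simpa using hw
  have := (convex_closedBall (0 : E) ‖z‖).norm_image_sub_le_of_norm_fderiv_le
    (f := f) (C := |C| * ‖z‖) (x := 0) (y := z)
    (fun w h => (hb w ((hw w h).trans_lt hz)).2)
    (fun w h => (hb w ((hw w h).trans_lt hz)).1.trans
      (mul_le_mul (le_abs_self C) (hw w h) (norm_nonneg _) (abs_nonneg _)))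
    (by simp) (by simp)
  simpa [h0, sq, mul_assoc] using this

/-! ### Principal values by symmetrization -/

section general
variable {E : Type*} [NormedAddCommGroup E] [NormedSpace ℝ E] [FiniteDimensional ℝ E]
  [MeasurableSpace E] [BorelSpace E] [Nontrivial E] (μ : Measure E) [μ.IsAddHaarMeasure]

/-- The radial majorant used throughout: a power above `-dim E` near the origin, and
below `-dim E` at infinity. -/
lemma integrable_cutoff_rpow {p q r C M : ℝ} (hp : (Module.finrank ℝ E : ℝ) < p)
    (hq : -(Module.finrank ℝ E : ℝ) < q) (hr : 0 < r) :
    Integrable (fun z : E => if ‖z‖ < r then C * ‖z‖ ^ q else M * ‖z‖ ^ (-p)) μ := by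
  have hpos : 1 ≤ Module.finrank ℝ E := Module.finrank_pos
  rw [integrable_fun_norm_addHaar μ (f := fun t => if t < r then C * t ^ q else M * t ^ (-p))]
  rw [← Ioo_union_Ici_eq_Ioi hr]
  have key : ∀ t : ℝ, 0 < t → ∀ a : ℝ,
      t ^ (Module.finrank ℝ E - 1) * t ^ a = t ^ ((Module.finrank ℝ E : ℝ) - 1 + a) := by
    intro t ht a
    rw [rpow_add ht, ← rpow_natCast, Nat.cast_sub hpos, Nat.cast_one]
  refine IntegrableOn.union ?_ ?_
  · have := ((intervalIntegral.integrableOn_Ioo_rpow_iff (s := (Module.finrank ℝ E : ℝ) - 1 + q)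
      hr).2 (by linarith)).const_mul C
    refine IntegrableOn.congr_fun this (fun t ht => ?_) measurableSet_Ioo
    simp only [ht.2, if_true, smul_eq_mul]
    rw [← key t ht.1]; ring
  · rw [integrableOn_Ici_iff_integrableOn_Ioi]
    have := (integrableOn_Ioi_rpow_of_lt (a := (Module.finrank ℝ E : ℝ) - 1 + -p)
      (by linarith) hr).const_mul M
    refine IntegrableOn.congr_fun this (fun t ht => ?_) measurableSet_Ioi
    simp only [not_lt.2 (le_of_lt (mem_Ioi.1 ht)), if_false, smul_eq_mul]
    rw [← key t (hr.trans ht)]; ring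

/-- A bounded function that is `C²` at the origin and vanishes there to first order is integrable
against the kernel `‖z‖ ^ (-p)` when `dim E < p < dim E + 2`. -/
lemma integrable_div_norm_rpow {p : ℝ} (hp : (Module.finrank ℝ E : ℝ) < p)
    (hp2 : p < (Module.finrank ℝ E : ℝ) + 2) {F : E → ℝ} (hF : Measurable F) {M : ℝ}
    (hM : ∀ z, |F z| ≤ M) (hF2 : ContDiffAt ℝ 2 F 0) (h0 : F 0 = 0) (h1 : fderiv ℝ F 0 = 0) :
    Integrable (fun z => F z / ‖z‖ ^ p) μ := by
  obtain ⟨C, r, hC0, hr, hC⟩ := quadratic_bound hF2 h0 h1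
  have hp0 : 0 < p := lt_of_le_of_lt (Nat.cast_nonneg _) hp
  refine (integrable_cutoff_rpow μ (C := C) (M := M) hp (q := 2 - p) (by linarith) hr).mono'
    (by fun_prop : Measurable fun z => F z / ‖z‖ ^ p).aestronglyMeasurable
    (ae_of_all _ fun z => ?_)
  -- at `z = 0` the quotient is `F 0 / 0 = 0`
  rcases eq_or_ne z 0 with rfl | hz
  · simp only [norm_zero, zero_rpow hp0.ne', div_zero, norm_zero, hr, if_true]
    positivity
  · have hz' : 0 < ‖z‖ := norm_pos_iff.2 hz
    have hzp : 0 < ‖z‖ ^ p := rpow_pos_of_pos hz' p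
    rw [norm_div, norm_eq_abs, norm_of_nonneg hzp.le]
    split_ifs with h
    · rw [rpow_sub hz', mul_div_assoc', rpow_two]
      gcongr
      exact hC z h
    · rw [rpow_neg hz'.le, ← div_eq_mul_inv]
      gcongr
      exact hM z

lemma integral_symmetrize {F : E → ℝ} (hF : Integrable F μ) :
    ∫ z, F z ∂μ = (1 / 2) * ∫ z, (F z + F (-z)) ∂μ := by
  rw [integral_add hF hF.comp_neg, integral_neg_eq_self]; ring

lemma integrable_symm {p : ℝ} (hp : (Module.finrank ℝ E : ℝ) < p)
    (hp2 : p < (Module.finrank ℝ E : ℝ) + 2) {g : E → ℝ} (hg : Measurable g) {M : ℝ}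
    (hM : ∀ z, |g z| ≤ M) (hg2 : ContDiffAt ℝ 2 g 0) :
    Integrable (fun z => (g z + g (-z) - 2 * g 0) / ‖z‖ ^ p) μ := by
  have hgn : ContDiffAt ℝ 2 (fun z => g (-z)) 0 := by
    have : ContDiffAt ℝ 2 g (-(0 : E)) := by simpa using hg2
    exact this.comp (0 : E) contDiff_neg.contDiffAt
  refine integrable_div_norm_rpow μ hp hp2 (F := fun z => g z + g (-z) - 2 * g 0)
    (by fun_prop) (M := 4 * M) (fun z => ?_) ((hg2.add hgn).sub contDiffAt_const)
    (by simp; ring) ?_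
  · have a := abs_le.1 (hM z); have b := abs_le.1 (hM (-z)); have c := abs_le.1 (hM 0)
    rw [abs_le]; constructor <;> linarith [a.1, a.2, b.1, b.2, c.1, c.2]
  · have h1 : HasFDerivAt g (fderiv ℝ g 0) 0 := (hg2.differentiableAt (by norm_num)).hasFDerivAt
    have h2 : HasFDerivAt (fun z => g (-z)) (-(fderiv ℝ g 0)) 0 := by
      have h1' : HasFDerivAt g (fderiv ℝ g 0) (-(0 : E)) := by simpa using h1
      have := h1'.comp (0 : E) ((hasFDerivAt_id (𝕜 := ℝ) (0 : E)).neg)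
      convert! this using 1
      ext; simp
    have := ((h1.add h2).sub_const (2 * g 0)).fderiv
    simpa using this

/-- The principal value of `g` at `0` exists and equals half of the absolutely convergent integral
of second differences. -/
lemma tendsto_principalValue {p : ℝ} (hp : (Module.finrank ℝ E : ℝ) < p)
    (hp2 : p < (Module.finrank ℝ E : ℝ) + 2) {g : E → ℝ} (hg : Measurable g) {M : ℝ}
    (hM : ∀ z, |g z| ≤ M) (hg2 : ContDiffAt ℝ 2 g 0) :
    Tendsto (fun δ : ℝ => ∫ y in {y : E | δ < ‖y‖}, (g y - g 0) / ‖y‖ ^ p ∂μ) (𝓝[>] 0)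
      (𝓝 ((1 / 2) * ∫ y, (g y + g (-y) - 2 * g 0) / ‖y‖ ^ p ∂μ)) := by
  have hcov : AECover μ (𝓝[>] (0 : ℝ)) (fun δ => {y : E | δ < ‖y‖}) := by
    refine ⟨?_, fun δ => measurableSet_lt measurable_const measurable_norm⟩
    have : ∀ᵐ y ∂μ, y ≠ (0 : E) := by simp [ae_iff, measure_singleton]
    filter_upwards [this] with y hy
    exact nhdsWithin_le_nhds (Iio_mem_nhds (norm_pos_iff.2 hy))
  have hlim := (hcov.integral_tendsto_of_countably_generated
    (integrable_symm μ hp hp2 hg hM hg2)).const_mul (1 / 2 : ℝ)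
  refine hlim.congr' ?_
  filter_upwards [self_mem_nhdsWithin] with δ hδ
  have hδ : (0 : ℝ) < δ := hδ
  have hms : MeasurableSet {y : E | δ < ‖y‖} := measurableSet_lt measurable_const measurable_norm
  rw [← integral_indicator hms, ← integral_indicator hms]
  -- away from the origin no symmetrization is needed for integrability
  have hint : Integrable ({y : E | δ < ‖y‖}.indicator (fun y => (g y - g 0) / ‖y‖ ^ p)) μ := by
    refine (integrable_cutoff_rpow μ (C := 0) (M := 2 * M) hp (q := 0)
      (by simpa using Module.finrank_pos (R := ℝ) (M := E)) hδ).mono'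
      ((by fun_prop : Measurable fun y => (g y - g 0) / ‖y‖ ^ p).indicator hms).aestronglyMeasurable
      (ae_of_all _ fun z => ?_)
    have a := abs_le.1 (hM z)
    have c := abs_le.1 (hM 0)
    by_cases hz : δ < ‖z‖
    · rw [indicator_of_mem (by exact hz), if_neg (not_lt.2 hz.le), rpow_neg (norm_nonneg _),
        ← div_eq_mul_inv, norm_div, norm_of_nonneg (rpow_nonneg (norm_nonneg z) p), norm_eq_abs]
      gcongr
      rw [abs_le]; constructor <;> linarith [a.1, a.2, c.1, c.2]
    · rw [indicator_of_notMem (by exact hz), norm_zero]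
      split_ifs
      · simp
      · have : 0 ≤ M := (abs_nonneg _).trans (hM 0)
        positivity
  rw [integral_symmetrize μ hint]
  congr 1
  refine integral_congr_ae (ae_of_all _ fun z => ?_)
  by_cases hz : δ < ‖z‖
  · have hz' : z ∈ {y : E | δ < ‖y‖} := hz
    have hz'' : -z ∈ {y : E | δ < ‖y‖} := by simpa using hz
    simp only [indicator_of_mem hz', indicator_of_mem hz'', norm_neg]
    ring
  · have hz' : z ∉ {y : E | δ < ‖y‖} := hz
    have hz'' : -z ∉ {y : E | δ < ‖y‖} := by simpa using hz
    simp only [indicator_of_notMem hz', indicator_of_notMem hz'', add_zero]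

lemma integral_symm_scale {p ε : ℝ} (hε : 0 < ε) (g : E → ℝ) :
    ∫ z, (g (ε • z) + g (-(ε • z)) - 2 * g 0) / ‖z‖ ^ p ∂μ =
      ε ^ (p - Module.finrank ℝ E) * ∫ y, (g y + g (-y) - 2 * g 0) / ‖y‖ ^ p ∂μ := by
  have h := Measure.integral_comp_smul μ
    (fun y => (g y + g (-y) - 2 * g 0) / ‖y‖ ^ p) ε
  rw [abs_of_nonneg (by positivity), smul_eq_mul] at h
  have h2 : (fun z => (g (ε • z) + g (-(ε • z)) - 2 * g 0) / ‖z‖ ^ p) =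
      fun z => ε ^ p * ((g (ε • z) + g (-(ε • z)) - 2 * g 0) / ‖ε • z‖ ^ p) := by
    ext z
    have : 0 < ε ^ p := rpow_pos_of_pos hε p
    rw [norm_smul, norm_of_nonneg hε.le, mul_rpow hε.le (norm_nonneg _)]
    rw [mul_div_assoc', mul_div_mul_left _ _ this.ne']
  rw [h2, integral_const_mul, h, rpow_sub hε, rpow_natCast]
  ring
end general

/-! ### Reduction to one dimension -/

/-- A unit vector `e` can be rotated onto the first coordinate of `ℝ × ℝᵐ`: extend `e` and `(1, 0)`
to orthonormal bases and match them. -/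
lemma exists_isometry_prod {m : ℕ} (e : EuclideanSpace ℝ (Fin (m + 1))) (he : ‖e‖ = 1) :
    ∃ T : EuclideanSpace ℝ (Fin (m + 1)) ≃ₗᵢ[ℝ] WithLp 2 (ℝ × EuclideanSpace ℝ (Fin m)),
      ∀ z, (T z).fst = ⟪e, z⟫ := by
  have aux : ∀ {V : Type} [NormedAddCommGroup V] [InnerProductSpace ℝ V] [FiniteDimensional ℝ V]
      (v : V), ‖v‖ = 1 → Module.finrank ℝ V = m + 1 →
      ∃ b : OrthonormalBasis (Fin (m + 1)) ℝ V, b 0 = v := by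
    intro V _ _ _ v hv hr
    have ho : Orthonormal ℝ (({0} : Set (Fin (m + 1))).domRestrict (fun _ => v)) := by
      refine ⟨fun i => by simpa using hv, fun i j hij => ?_⟩
      exact absurd (Subsingleton.elim i j) hij
    obtain ⟨b, hb⟩ := ho.exists_orthonormalBasis_extension_of_card_eq (by simpa using hr)
    exact ⟨b, hb 0 rfl⟩
  obtain ⟨b, hb⟩ := aux e he (by simp)
  obtain ⟨b', hb'⟩ := aux (WithLp.toLp 2 ((1 : ℝ), (0 : EuclideanSpace ℝ (Fin m))))
    (by rw [WithLp.prod_norm_eq_of_L2]; simp)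
    (by rw [(WithLp.linearEquiv 2 ℝ (ℝ × EuclideanSpace ℝ (Fin m))).finrank_eq]; simp [add_comm])
  refine ⟨b.equiv b' (Equiv.refl _), fun z => ?_⟩
  have h1 : b.equiv b' (Equiv.refl _) e = WithLp.toLp 2 ((1 : ℝ), (0 : EuclideanSpace ℝ (Fin m))) := by
    rw [← hb, ← hb']; simp
  rw [← (b.equiv b' (Equiv.refl _)).inner_map_map e z, h1]
  simp [WithLp.prod_inner_apply]

/-- The substitution `w = |h| y` computes the integral of the kernel over the slice at height `h`.
-/
lemma integral_slice {m : ℕ} {p h : ℝ} (hh : h ≠ 0) :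
    ∫ w : EuclideanSpace ℝ (Fin m), ((h ^ 2 + ‖w‖ ^ 2) ^ (p / 2))⁻¹ =
      |h| ^ ((m : ℝ) - p) * ∫ y : EuclideanSpace ℝ (Fin m), (‖y‖ ^ 2 + 1) ^ (-(p / 2)) := by
  have hpos : 0 < |h| := abs_pos.2 hh
  have hs := Measure.integral_comp_smul (volume : Measure (EuclideanSpace ℝ (Fin m)))
    (fun w => ((h ^ 2 + ‖w‖ ^ 2) ^ (p / 2))⁻¹) |h|
  rw [finrank_euclideanSpace_fin, abs_of_nonneg (by positivity : (0 : ℝ) ≤ (|h| ^ m)⁻¹),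
    smul_eq_mul] at hs
  have h2 : ∀ y : EuclideanSpace ℝ (Fin m), ((h ^ 2 + ‖|h| • y‖ ^ 2) ^ (p / 2))⁻¹ =
      |h| ^ (-p) * (‖y‖ ^ 2 + 1) ^ (-(p / 2)) := by
    intro y
    have h3 : h ^ 2 + ‖|h| • y‖ ^ 2 = |h| ^ 2 * (‖y‖ ^ 2 + 1) := by
      rw [norm_smul, norm_eq_abs, abs_abs, mul_pow, ← sq_abs h]; ring
    have h4 : (|h| ^ 2) ^ (p / 2) = |h| ^ p := by
      rw [← rpow_two, ← rpow_mul hpos.le]; congr 1; ring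
    have h5 : (0 : ℝ) ≤ ‖y‖ ^ 2 + 1 := by positivity
    rw [h3, mul_rpow (by positivity) h5, h4, mul_inv, rpow_neg hpos.le, rpow_neg h5]
  have hs := (integral_congr_ae (ae_of_all _ h2)).symm.trans hs
  rw [integral_const_mul] at hs
  have hm : 0 < |h| ^ m := by positivity
  rw [sub_eq_add_neg, rpow_add hpos, rpow_natCast, mul_assoc, hs]
  field_simp

/-- Integrating a function of `⟪e, z⟫` alone, `‖e‖ = 1`, against `‖z‖ ^ (-p)` on `ℝᵐ⁺¹` reduces to an
integral over `ℝ` with the exponent lowered by `m`. -/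
lemma integral_ridge {m : ℕ} {p : ℝ} (e : EuclideanSpace ℝ (Fin (m + 1))) (he : ‖e‖ = 1)
    (ψ : ℝ → ℝ)
    (hint : Integrable (fun z : EuclideanSpace ℝ (Fin (m + 1)) => ψ ⟪e, z⟫ / ‖z‖ ^ p)) :
    ∫ z : EuclideanSpace ℝ (Fin (m + 1)), ψ ⟪e, z⟫ / ‖z‖ ^ p =
      (∫ y : EuclideanSpace ℝ (Fin m), (‖y‖ ^ 2 + 1) ^ (-(p / 2))) *
        ∫ h : ℝ, ψ h / |h| ^ (p - m) := by
  obtain ⟨T, hT⟩ := exists_isometry_prod e he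
  set G : ℝ × EuclideanSpace ℝ (Fin m) → ℝ :=
    fun q => ψ q.1 * ((q.1 ^ 2 + ‖q.2‖ ^ 2) ^ (p / 2))⁻¹ with hG
  have hmp : MeasurePreserving
      (T.toMeasurableEquiv.trans
        (MeasurableEquiv.toLp 2 (ℝ × EuclideanSpace ℝ (Fin m))).symm) volume volume :=
    (LinearIsometryEquiv.measurePreserving T).trans
      (WithLp.volume_preserving_symm_measurableEquiv_toLp_prod _ _)
  have hcomp : (fun z : EuclideanSpace ℝ (Fin (m + 1)) => ψ ⟪e, z⟫ / ‖z‖ ^ p) =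
      G ∘ (T.toMeasurableEquiv.trans
        (MeasurableEquiv.toLp 2 (ℝ × EuclideanSpace ℝ (Fin m))).symm) := by
    ext z
    have h1 : (T z).fst = ⟪e, z⟫ := hT z
    have h2 : ‖z‖ ^ 2 = (T z).fst ^ 2 + ‖(T z).snd‖ ^ 2 := by
      rw [← T.norm_map z, WithLp.prod_norm_sq_eq_of_L2]; simp
    have h3 : ‖z‖ ^ p = ((T z).fst ^ 2 + ‖(T z).snd‖ ^ 2) ^ (p / 2) := by
      rw [← h2, ← rpow_two, ← rpow_mul (norm_nonneg _)]; congr 1; ring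
    rw [h3, ← h1, div_eq_mul_inv]
    rfl
  have hGint : Integrable G (volume.prod volume) := by
    rw [← Measure.volume_eq_prod, ← hmp.integrable_comp_emb (MeasurableEquiv.measurableEmbedding _),
      ← hcomp]
    exact hint
  have hI : ∫ z : EuclideanSpace ℝ (Fin (m + 1)), ψ ⟪e, z⟫ / ‖z‖ ^ p =
      ∫ q, G q ∂(volume.prod volume) := by
    rw [← Measure.volume_eq_prod, ← hmp.integral_comp (MeasurableEquiv.measurableEmbedding _) G,
      hcomp]
    rfl
  rw [hI, integral_prod _ hGint, ← integral_const_mul]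
  have hne : ∀ᵐ h : ℝ, h ≠ 0 := by simp [ae_iff, measure_singleton]
  refine integral_congr_ae ?_
  filter_upwards [hne] with h hh
  simp only [hG]
  rw [integral_const_mul, integral_slice hh, ← neg_sub p, rpow_neg (abs_nonneg _)]
  ring

/-! ### The identity -/

/-- **Lemma.** For `x ∈ Q_ρ` and `ε > 0`,
`a_ε(d(x)/ε; x) = ε^{2s}·I_n^s[φ(d(·)/ε)](x) − C_{n,s}·I_1^s[φ](d(x)/ε)`,
where the fractional Laplacians are principal-value integrals; the statement asserts at
the same time the existence of the two principal values `L₁`, `L₂`. -/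
theorem aeps_eq_fractional_laplacians
    (n : ℕ) (hn : 2 ≤ n) (s : ℝ) (hs : s ∈ Set.Ioo (0 : ℝ) 1)
    (Ω : Set (EuclideanSpace ℝ (Fin n))) (hΩopen : IsOpen Ω) (hΩconn : IsConnected Ω)
    (d : EuclideanSpace ℝ (Fin n) → ℝ)
    (hd : ∀ x : EuclideanSpace ℝ (Fin n),
      (x ∈ Ω → d x = Metric.infDist x (frontier Ω)) ∧
      (x ∉ Ω → d x = -Metric.infDist x (frontier Ω)))
    (ρ : ℝ) (hρ : 0 < ρ)
    (hsmooth : ContDiffOn ℝ (⊤ : ℕ∞) d {x : EuclideanSpace ℝ (Fin n) | |d x| < 2 * ρ})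
    (hgrad : ∀ x ∈ {x : EuclideanSpace ℝ (Fin n) | |d x| < 2 * ρ}, ‖gradient d x‖ = 1)
    -- the phase transition φ : ℝ → (0,1), of class C^{2,β}
    (φ : ℝ → ℝ) (hφmem : ∀ ξ : ℝ, φ ξ ∈ Set.Ioo (0 : ℝ) 1)
    (β : ℝ≥0) (hβ0 : 0 < β) (hβ1 : β < 1)
    (hφreg : ContDiff ℝ 2 φ) (Cφ : ℝ≥0) (hφHolder : HolderWith Cφ β (deriv (deriv φ)))
    (hφ' : ∀ ξ : ℝ, 0 < deriv φ ξ)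
    (hφbot : Filter.Tendsto φ Filter.atBot (nhds 0))
    (hφtop : Filter.Tendsto φ Filter.atTop (nhds 1)) :
    ∀ x ∈ {x : EuclideanSpace ℝ (Fin n) | |d x| < ρ}, ∀ ε : ℝ, 0 < ε →
      ∃ L₁ L₂ : ℝ,
        -- L₁ is the principal value I_n^s[φ(d(·)/ε)](x)
        Filter.Tendsto
          (fun δ : ℝ => ∫ y in {y : EuclideanSpace ℝ (Fin n) | δ < ‖y‖},
            (φ (d (x + y) / ε) - φ (d x / ε)) / ‖y‖ ^ ((n : ℝ) + 2*s))
          (nhdsWithin 0 (Set.Ioi 0)) (nhds L₁) ∧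
        -- L₂ is the principal value I_1^s[φ](d(x)/ε)
        Filter.Tendsto
          (fun δ : ℝ => ∫ h in {h : ℝ | δ < |h|},
            (φ (d x / ε + h) - φ (d x / ε)) / |h| ^ (1 + 2*s))
          (nhdsWithin 0 (Set.Ioi 0)) (nhds L₂) ∧
        -- a_ε(d(x)/ε; x) = ε^{2s} L₁ − C_{n,s} L₂
        (∫ z : EuclideanSpace ℝ (Fin n),
            (φ (d x / ε + (d (x + ε • z) - d x) / ε) - φ (d x / ε + ⟪gradient d x, z⟫))
              / ‖z‖ ^ ((n : ℝ) + 2*s))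
          = ε ^ (2*s) * L₁
            - (∫ y : EuclideanSpace ℝ (Fin (n-1)), (‖y‖^2 + 1) ^ (-(((n : ℝ) + 2*s)/2))) * L₂ := by
  intro x hx ε hε
  obtain ⟨m, rfl⟩ : ∃ m, n = m + 1 := ⟨n - 1, by omega⟩
  obtain ⟨hs0, hs1⟩ := hs
  have hx : |d x| < ρ := hx
  have hdc : Continuous d := continuous_signedDist Ω d hd
  have hU : {x : EuclideanSpace ℝ (Fin (m + 1)) | |d x| < 2 * ρ} ∈ 𝓝 x :=
    (isOpen_lt hdc.abs continuous_const).mem_nhds (show |d x| < 2 * ρ by linarith)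
  have hdx : ContDiffAt ℝ 2 d x := (hsmooth.contDiffAt hU).of_le (by
    have : (2 : ℕ∞) ≤ ⊤ := le_top
    exact WithTop.coe_le_coe.2 this)
  have hgr : HasFDerivAt d (innerSL ℝ (gradient d x)) x := by
    have := (hdx.differentiableAt (by norm_num)).hasGradientAt.hasFDerivAt
    convert! this using 1
  set e := gradient d x with he
  have hen : ‖e‖ = 1 := hgrad x (show |d x| < 2 * ρ by linarith)
  have hφc : Continuous φ := hφreg.continuous
  have hφb : ∀ t, |φ t| ≤ 1 := fun t => abs_le.2 ⟨by linarith [(hφmem t).1], (hφmem t).2.le⟩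
  -- the two profiles `g (ε • ·)` and `k`, which agree to first order at the origin
  set ξ := d x / ε with hξ
  set p : ℝ := ((m + 1 : ℕ) : ℝ) + 2 * s with hp
  set g : EuclideanSpace ℝ (Fin (m + 1)) → ℝ := fun y => φ (d (x + y) / ε) with hg
  set k : EuclideanSpace ℝ (Fin (m + 1)) → ℝ := fun z => φ (ξ + ⟪e, z⟫) with hk
  have hr : Module.finrank ℝ (EuclideanSpace ℝ (Fin (m + 1))) = m + 1 := by simp
  have hp1 : (Module.finrank ℝ (EuclideanSpace ℝ (Fin (m + 1))) : ℝ) < p := by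
    rw [hr]; linarith
  have hp2 : p < (Module.finrank ℝ (EuclideanSpace ℝ (Fin (m + 1))) : ℝ) + 2 := by
    rw [hr]; linarith
  have hgm : Measurable g := by
    have : Continuous g := by fun_prop
    exact this.measurable
  have hkm : Measurable k := by
    have : Continuous k := by fun_prop
    exact this.measurable
  have hg2 : ContDiffAt ℝ 2 g 0 := by
    have h1 : ContDiffAt ℝ 2 d (x + (0 : EuclideanSpace ℝ (Fin (m + 1)))) := by simpa using hdx
    have h2 : ContDiffAt ℝ 2 (fun y => d (x + y)) (0 : EuclideanSpace ℝ (Fin (m + 1))) :=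
      h1.comp (0 : EuclideanSpace ℝ (Fin (m + 1))) (contDiffAt_const.add contDiffAt_id)
    exact hφreg.contDiffAt.comp _ (h2.div_const ε)
  have hk2 : ContDiffAt ℝ 2 k 0 :=
    hφreg.contDiffAt.comp _ (contDiffAt_const.add (innerSL ℝ e).contDiff.contDiffAt)
  have hge2 : ContDiffAt ℝ 2 (fun z => g (ε • z)) 0 := by
    have h1 : ContDiffAt ℝ 2 g (ε • (0 : EuclideanSpace ℝ (Fin (m + 1)))) := by simpa using hg2
    exact h1.comp (0 : EuclideanSpace ℝ (Fin (m + 1))) (contDiffAt_id.const_smul ε)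
  have hgd : HasFDerivAt (fun z => g (ε • z)) (deriv φ ξ • innerSL ℝ e) 0 := by
    have h1 : HasFDerivAt (fun z : EuclideanSpace ℝ (Fin (m + 1)) => x + ε • z)
        (ε • ContinuousLinearMap.id ℝ _) 0 := ((hasFDerivAt_id _).const_smul ε).const_add x
    have h2 : HasFDerivAt d (innerSL ℝ e) (x + ε • (0 : EuclideanSpace ℝ (Fin (m + 1)))) := by
      simpa using hgr
    have h3 : HasFDerivAt (fun z : EuclideanSpace ℝ (Fin (m + 1)) => d (x + ε • z) / ε)
        (innerSL ℝ e) 0 := by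
      have := (h2.comp (0 : EuclideanSpace ℝ (Fin (m + 1))) h1).const_mul ε⁻¹
      convert! this using 1
      · ext z; simp [div_eq_inv_mul]
      · ext z; simp [hε.ne']
    have h4 : HasDerivAt φ (deriv φ ξ) (d (x + ε • (0 : EuclideanSpace ℝ (Fin (m + 1)))) / ε) := by
      simpa [hξ] using (hφreg.differentiable (by norm_num) ξ).hasDerivAt
    exact h4.comp_hasFDerivAt (0 : EuclideanSpace ℝ (Fin (m + 1))) h3
  have hkd : HasFDerivAt k (deriv φ ξ • innerSL ℝ e) 0 := by
    have h3 : HasFDerivAt (fun z : EuclideanSpace ℝ (Fin (m + 1)) => ξ + ⟪e, z⟫)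
        (innerSL ℝ e) 0 := (innerSL ℝ e).hasFDerivAt.const_add ξ
    have h4 : HasDerivAt φ (deriv φ ξ) (ξ + ⟪e, (0 : EuclideanSpace ℝ (Fin (m + 1)))⟫) := by
      simpa using (hφreg.differentiable (by norm_num) ξ).hasDerivAt
    exact h4.comp_hasFDerivAt (0 : EuclideanSpace ℝ (Fin (m + 1))) h3
  have hg0 : g 0 = φ ξ := by simp [hg, hξ]
  have hk0 : k 0 = φ ξ := by simp [hk]
  have hA : Integrable (fun z => (g (ε • z) - k z) / ‖z‖ ^ p) := by
    refine integrable_div_norm_rpow volume hp1 hp2 (F := fun z => g (ε • z) - k z) (by fun_prop)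
      (M := 2) (fun z => ?_) (hge2.sub hk2) (by simp [hg0, hk0]) ?_
    · exact (abs_sub _ _).trans (by linarith [hφb (d (x + ε • z) / ε), hφb (ξ + ⟪e, z⟫)])
    · have := (hgd.sub hkd).fderiv
      rw [sub_self] at this
      exact this
  have hIg := integrable_symm volume hp1 hp2 (g := fun z => g (ε • z)) (by fun_prop)
    (fun z => hφb _) hge2
  have hIk := integrable_symm volume hp1 hp2 hkm (fun z => hφb _) hk2
  have hone : Tendsto (fun δ : ℝ => ∫ h in {h : ℝ | δ < |h|},
      (φ (ξ + h) - φ ξ) / |h| ^ (1 + 2 * s)) (𝓝[>] 0)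
      (𝓝 ((1 / 2) * ∫ h : ℝ, (φ (ξ + h) + φ (ξ - h) - 2 * φ ξ) / |h| ^ (1 + 2 * s))) := by
    have := tendsto_principalValue (volume : Measure ℝ) (p := 1 + 2 * s)
      (by simp; linarith) (by simp; linarith) (g := fun h => φ (ξ + h)) (by fun_prop)
      (fun z => hφb _) (by fun_prop)
    simpa [sub_eq_add_neg] using this
  refine ⟨(1 / 2) * ∫ y, (g y + g (-y) - 2 * g 0) / ‖y‖ ^ p, _, ?_, hone, ?_⟩
  · have := tendsto_principalValue volume hp1 hp2 hgm (fun z => hφb _) hg2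
    rw [hg0] at this
    simpa only [hg0] using this
  · have hlhs : ∀ z : EuclideanSpace ℝ (Fin (m + 1)),
        (φ (ξ + (d (x + ε • z) - d x) / ε) - φ (ξ + ⟪e, z⟫)) / ‖z‖ ^ p =
          (g (ε • z) - k z) / ‖z‖ ^ p := by
      intro z
      have : ξ + (d (x + ε • z) - d x) / ε = d (x + ε • z) / ε := by rw [hξ]; ring
      rw [this]
    have hridge := integral_ridge e hen
      (fun h => φ (ξ + h) + φ (ξ - h) - 2 * φ ξ) (p := p) (by
        simpa [hk, inner_neg_right, sub_eq_add_neg] using hIk)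
    have hpm : p - m = 1 + 2 * s := by rw [hp]; push_cast; ring
    rw [hpm] at hridge
    have hscale := integral_symm_scale volume (p := p) hε g
    have hps : p - (Module.finrank ℝ (EuclideanSpace ℝ (Fin (m + 1))) : ℝ) = 2 * s := by
      rw [hr]; ring
    rw [hps] at hscale
    have hsplit : ∀ z : EuclideanSpace ℝ (Fin (m + 1)),
        (g (ε • z) - k z) / ‖z‖ ^ p + (g (ε • -z) - k (-z)) / ‖-z‖ ^ p =
        (g (ε • z) + g (ε • -z) - 2 * g (ε • 0)) / ‖z‖ ^ p -
          (φ (ξ + ⟪e, z⟫) + φ (ξ - ⟪e, z⟫) - 2 * φ ξ) / ‖z‖ ^ p := by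
      intro z
      have : k (-z) = φ (ξ - ⟪e, z⟫) := by simp [hk, inner_neg_right, sub_eq_add_neg]
      rw [this, norm_neg, smul_zero, hg0]
      ring
    have hIk' : Integrable (fun z : EuclideanSpace ℝ (Fin (m + 1)) =>
        (φ (ξ + ⟪e, z⟫) + φ (ξ - ⟪e, z⟫) - 2 * φ ξ) / ‖z‖ ^ p) := by
      simpa [hk, inner_neg_right, sub_eq_add_neg] using hIk
    simp only [hlhs]
    rw [integral_symmetrize volume hA]
    simp only [hsplit]
    rw [integral_sub hIg hIk', hridge]
    simp only [smul_neg, smul_zero]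
    rw [hscale]
    change _ = _ - (∫ y : EuclideanSpace ℝ (Fin m), (‖y‖ ^ 2 + 1) ^ (-(p / 2))) * _
    ring
end

section
/- Let n ≥ 2 and s ∈ (0,1/2). Then there exists a constant C > 0 such that for all R > 0 and τ > 0, ∫_{{y = (y',y_n) ∈ ℝ^{n-1}×ℝ : |y_n| < τ and |y_n| < R|y'|²}} |y|^{-(n+2s)} dy ≤ C R^{(1+2s)/2} τ^{(1−2s)/2}. -/
/-!
The region is sliced by the last coordinate `t = y_n`.  Writing `x = y'`, a point of the region
has `|t| < τ` and, as `|x|² ≤ (n-1)‖x‖²` for the sup norm `‖x‖` on `ℝ^{n-1}`, it satisfies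
`‖x‖ > √(|t| / (R(n-1)))`, while `|y| ≥ ‖x‖`.  Integrating `‖x‖^{-(n+2s)}` over that exterior
region (`lintegral_tail`) gives a constant times `(|t| / R)^{-(1+2s)/2}`, and since
`(1+2s)/2 < 1` this is integrable over `|t| < τ` (`lintegral_abs_rpow`), with integral a constant
times `R^{(1+2s)/2} τ^{(1-2s)/2}`.  Using the sup norm on `ℝ^{n-1}` costs only a factor depending
on `n`, and allows the product measure on `Fin (n-1) → ℝ` to be used directly; polar coordinates hold
for any norm.
-/

open MeasureTheory Real Set Filter
open scoped Topology

/-- Exterior integral of a negative power of the norm in dimension `m`, by polar coordinates. -/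
lemma lintegral_tail {m : ℕ} (hm : 1 ≤ m) {q ρ : ℝ} (hq : 0 < q) (hρ : 0 < ρ) :
    ∫⁻ x : Fin m → ℝ, ENNReal.ofReal ((Ioi ρ).indicator (fun r : ℝ => r ^ (-((m : ℝ) + q))) ‖x‖)
      = ENNReal.ofReal (m * volume.real (Metric.ball (0 : Fin m → ℝ) 1) / q * ρ ^ (-q)) := by
  have : Nonempty (Fin m) := ⟨⟨0, hm⟩⟩
  have hfun : EqOn (fun y : ℝ => y ^ (m - 1) •
      (Ioi ρ).indicator (fun r : ℝ => r ^ (-((m : ℝ) + q))) y)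
      ((Ioi ρ).indicator (fun r : ℝ => r ^ (-1 - q))) (Ioi 0) := by
    intro y hy
    have hy : 0 < y := hy
    by_cases h : y ∈ Ioi ρ
    · simp only [indicator_of_mem h, smul_eq_mul]
      rw [← Real.rpow_natCast, ← Real.rpow_add hy]
      congr 1
      push_cast [Nat.cast_sub hm]
      ring
    · simp [indicator_of_notMem h]
  have hsub : Ioi (0 : ℝ) ∩ Ioi ρ = Ioi ρ :=
    inter_eq_right.2 (Ioi_subset_Ioi hρ.le)
  have hint : Integrable (fun x : Fin m → ℝ =>
      (Ioi ρ).indicator (fun r : ℝ => r ^ (-((m : ℝ) + q))) ‖x‖) := by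
    rw [integrable_fun_norm_addHaar (volume : Measure (Fin m → ℝ))
      (f := (Ioi ρ).indicator (fun r : ℝ => r ^ (-((m : ℝ) + q))))]
    simp only [Module.finrank_fin_fun]
    rw [integrableOn_congr_fun hfun measurableSet_Ioi, IntegrableOn,
      integrable_indicator_iff measurableSet_Ioi, IntegrableOn,
      Measure.restrict_restrict measurableSet_Ioi, inter_comm, hsub]
    exact integrableOn_Ioi_rpow_of_lt (by linarith) hρ
  rw [← ofReal_integral_eq_lintegral_ofReal hint
    (.of_forall fun x => indicator_nonneg (fun r hr => (Real.rpow_nonneg (hρ.trans hr).le _)) _),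
    integral_fun_norm_addHaar (volume : Measure (Fin m → ℝ))
      ((Ioi ρ).indicator (fun r : ℝ => r ^ (-((m : ℝ) + q))))]
  simp only [Module.finrank_fin_fun]
  rw [setIntegral_congr_fun measurableSet_Ioi hfun, setIntegral_indicator measurableSet_Ioi, hsub,
    integral_Ioi_rpow_of_lt (by linarith) hρ]
  congr 1
  simp only [nsmul_eq_mul, smul_eq_mul]
  rw [show -1 - q + 1 = -q by ring, neg_div_neg_eq]
  ring

lemma lintegral_abs_rpow {a τ : ℝ} (ha : a < 1) (hτ : 0 < τ) :
    ∫⁻ t : ℝ, ENNReal.ofReal ((Iio τ).indicator (fun r : ℝ => r ^ (-a)) |t|)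
      = ENNReal.ofReal (2 * τ ^ (1 - a) / (1 - a)) := by
  have hsub : Ioi (0 : ℝ) ∩ Iio τ = Ioo 0 τ := Ioi_inter_Iio
  have hint : Integrable (fun t : ℝ => (Iio τ).indicator (fun r : ℝ => r ^ (-a)) ‖t‖) := by
    rw [integrable_fun_norm_addHaar (volume : Measure ℝ)
      (f := (Iio τ).indicator (fun r : ℝ => r ^ (-a)))]
    simp only [Module.finrank_self, Nat.sub_self, pow_zero, one_smul]
    rw [IntegrableOn, integrable_indicator_iff measurableSet_Iio, IntegrableOn,
      Measure.restrict_restrict measurableSet_Iio, inter_comm, hsub]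
    exact (intervalIntegral.integrableOn_Ioo_rpow_iff hτ).2 (by linarith)
  simp only [Real.norm_eq_abs] at hint
  rw [← ofReal_integral_eq_lintegral_ofReal hint,
    integral_comp_abs (f := (Iio τ).indicator (fun r : ℝ => r ^ (-a))),
    setIntegral_indicator measurableSet_Iio, hsub, ← integral_Ioc_eq_integral_Ioo,
    ← intervalIntegral.integral_of_le hτ.le, integral_rpow (Or.inl (by linarith)),
    show -a + 1 = 1 - a by ring, Real.zero_rpow (by linarith)]
  · congr 1; ring
  · refine .of_forall fun t => ?_
    by_cases h : |t| ∈ Iio τ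
    · simp only [indicator_of_mem h]; positivity
    · simp [indicator_of_notMem h]

/-- The estimate on `ℝ × ℝ^m`, with the sup norm on the second factor. -/
lemma lintegral_prod_region {m : ℕ} (hm : 1 ≤ m) {q R τ : ℝ} (hq : 0 < q) (hq2 : q < 2)
    (hR : 0 < R) (hτ : 0 < τ) :
    ∫⁻ z : ℝ × (Fin m → ℝ), {z : ℝ × (Fin m → ℝ) | |z.1| < τ ∧ |z.1| < R * ‖z.2‖ ^ 2}.indicator
        (fun z => ENNReal.ofReal (‖z.2‖ ^ (-((m : ℝ) + q)))) z
      = ENNReal.ofReal (m * volume.real (Metric.ball (0 : Fin m → ℝ) 1) / q * R ^ (q / 2)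
          * (2 * τ ^ (1 - q / 2) / (1 - q / 2))) := by
  have hS : MeasurableSet {z : ℝ × (Fin m → ℝ) | |z.1| < τ ∧ |z.1| < R * ‖z.2‖ ^ 2} := by
    rw [Set.ofPred_and]
    refine MeasurableSet.inter (measurableSet_lt ?_ ?_) (measurableSet_lt ?_ ?_) <;> fun_prop
  rw [Measure.volume_eq_prod, lintegral_prod _
    (Measurable.aemeasurable (Measurable.indicator (by fun_prop) hS))]
  set K := m * volume.real (Metric.ball (0 : Fin m → ℝ) 1) / q with hK
  have hK0 : 0 ≤ K := by positivity
  have key : ∀ᵐ t : ℝ, (∫⁻ x : Fin m → ℝ,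
      {z : ℝ × (Fin m → ℝ) | |z.1| < τ ∧ |z.1| < R * ‖z.2‖ ^ 2}.indicator
        (fun z => ENNReal.ofReal (‖z.2‖ ^ (-((m : ℝ) + q)))) (t, x))
      = ENNReal.ofReal (K * R ^ (q / 2)) *
        ENNReal.ofReal ((Iio τ).indicator (fun r : ℝ => r ^ (-(q / 2))) |t|) := by
    have h0 : ∀ᵐ t : ℝ, t ≠ 0 := by simp [ae_iff]
    filter_upwards [h0] with t ht
    have ht' : 0 < |t| := abs_pos.2 ht
    by_cases h : |t| < τ
    · rw [indicator_of_mem (show |t| ∈ Iio τ from h), ← ENNReal.ofReal_mul (by positivity)]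
      have hρ : 0 < √(|t| / R) := Real.sqrt_pos.2 (by positivity)
      have e : K * R ^ (q / 2) * |t| ^ (-(q / 2)) = K * √(|t| / R) ^ (-q) := by
        rw [Real.sqrt_eq_rpow, ← Real.rpow_mul (by positivity),
          show 1 / 2 * -q = -(q / 2) by ring, Real.div_rpow ht'.le hR.le,
          Real.rpow_neg hR.le, div_inv_eq_mul]
        ring
      rw [e, ← lintegral_tail hm hq hρ]
      refine lintegral_congr fun x => ?_
      have hiff : √(|t| / R) < ‖x‖ ↔ |t| < R * ‖x‖ ^ 2 := by
        rw [Real.sqrt_lt (by positivity) (norm_nonneg _), div_lt_iff₀' hR]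
      by_cases h' : |t| < R * ‖x‖ ^ 2
      · rw [indicator_of_mem (by exact ⟨h, h'⟩), indicator_of_mem (by exact hiff.2 h')]
      · rw [indicator_of_notMem (by exact fun hh => h' hh.2),
          indicator_of_notMem (by exact fun hh => h' (hiff.1 hh)), ENNReal.ofReal_zero]
    · rw [indicator_of_notMem (show |t| ∉ Iio τ from h), ENNReal.ofReal_zero, mul_zero]
      refine (lintegral_congr fun x => ?_).trans lintegral_zero
      rw [indicator_of_notMem (by exact fun hh => h hh.1)]
  rw [lintegral_congr_ae key, lintegral_const_mul' _ _ ENNReal.ofReal_ne_top,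
    lintegral_abs_rpow (by linarith) hτ, ← ENNReal.ofReal_mul (by positivity)]

/-- Comparison of the Euclidean norm on `ℝ^{m+1}` with the sup norm of the first `m`
coordinates. -/
lemma norm_compare {m : ℕ} (y : EuclideanSpace ℝ (Fin (m + 1))) :
    ‖fun j : Fin m => y j.castSucc‖ ≤ ‖y‖ ∧
    ‖y‖ ^ 2 - y (Fin.last m) ^ 2 ≤ m * ‖fun j : Fin m => y j.castSucc‖ ^ 2 := by
  constructor
  · exact (pi_norm_le_iff_of_nonneg (norm_nonneg _)).2 fun j => PiLp.norm_apply_le y j.castSucc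
  · rw [EuclideanSpace.real_norm_sq_eq, Fin.sum_univ_castSucc, add_sub_cancel_right]
    calc ∑ i : Fin m, y i.castSucc ^ 2
        ≤ ∑ i : Fin m, ‖fun j : Fin m => y j.castSucc‖ ^ 2 := by
          refine Finset.sum_le_sum fun i _ => ?_
          rw [← sq_abs]
          exact pow_le_pow_left₀ (abs_nonneg _)
            (norm_le_pi_norm (fun j : Fin m => y j.castSucc) i) 2
      _ = _ := by simp

/-- **Lemma.** For `n ≥ 2` and `s ∈ (0,1/2)` there is `C > 0` such that for all
`R, τ > 0`, `∫_{{|y_n| < τ, |y_n| < R|y'|²}} |y|^{-(n+2s)} dy ≤ C R^{(1+2s)/2} τ^{(1−2s)/2}`,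
where `y = (y',y_n) ∈ ℝ^{n-1} × ℝ` (so that `|y'|² = |y|² − y_n²`). -/
theorem kernel_integral_near_degenerate_set
    (n : ℕ) (hn : 2 ≤ n) (s : ℝ) (hs : s ∈ Set.Ioo (0 : ℝ) (1/2)) :
    ∃ C : ℝ, 0 < C ∧ ∀ R τ : ℝ, 0 < R → 0 < τ →
      (∫ y in {y : EuclideanSpace ℝ (Fin n) |
          |y ⟨n - 1, by omega⟩| < τ ∧
          |y ⟨n - 1, by omega⟩| < R * (‖y‖^2 - (y ⟨n - 1, by omega⟩)^2)},
        ‖y‖ ^ (-((n : ℝ) + 2*s)))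
        ≤ C * R ^ ((1 + 2*s)/2) * τ ^ ((1 - 2*s)/2) := by
  obtain ⟨hs0, hs1⟩ := hs
  obtain ⟨m, rfl⟩ : ∃ m, n = m + 1 := ⟨n - 1, by omega⟩
  have hm : 1 ≤ m := by omega
  have hm0 : (0 : ℝ) < m := by exact_mod_cast hm
  set q : ℝ := 1 + 2 * s with hq
  have hB : 0 < volume.real (Metric.ball (0 : Fin m → ℝ) 1) :=
    ENNReal.toReal_pos (Metric.measure_ball_pos _ _ one_pos).ne' measure_ball_lt_top.ne
  set K := m * volume.real (Metric.ball (0 : Fin m → ℝ) 1) / q with hK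
  have hq0 : 0 < q := by linarith
  have hq1 : 0 < 1 - q / 2 := by linarith
  have hK0 : 0 < K := by positivity
  refine ⟨K * (m : ℝ) ^ (q / 2) * (2 / (1 - q / 2)), by positivity, fun R τ hR hτ => ?_⟩
  have hlast : (⟨m + 1 - 1, by omega⟩ : Fin (m + 1)) = Fin.last m := rfl
  simp only [hlast]
  set S := {y : EuclideanSpace ℝ (Fin (m + 1)) | |y (Fin.last m)| < τ ∧
    |y (Fin.last m)| < R * (‖y‖ ^ 2 - y (Fin.last m) ^ 2)} with hSdef
  have hS : MeasurableSet S := by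
    rw [hSdef, Set.ofPred_and]
    refine MeasurableSet.inter (measurableSet_lt ?_ ?_) (measurableSet_lt ?_ ?_) <;> fun_prop
  rw [integral_eq_lintegral_of_nonneg_ae (.of_forall fun y => by positivity)
    (Measurable.aestronglyMeasurable (by fun_prop))]
  refine ENNReal.toReal_le_of_le_ofReal (by positivity) ?_
  set e : EuclideanSpace ℝ (Fin (m + 1)) → ℝ × (Fin m → ℝ) := fun y =>
    MeasurableEquiv.piFinSuccAbove (fun _ => ℝ) (Fin.last m) (WithLp.ofLp y)
  have he : MeasurePreserving e :=
    (volume_preserving_piFinSuccAbove (fun _ => ℝ) (Fin.last m)).comp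
      (PiLp.volume_preserving_ofLp (Fin (m + 1)))
  have he1 : ∀ y, (e y).1 = y (Fin.last m) := fun y => rfl
  have he2 : ∀ y, (e y).2 = fun j : Fin m => y j.castSucc := fun y => by
    funext j
    change y ((Fin.last m).succAbove j) = _
    rw [Fin.succAbove_last]
  have hmR : 0 < R * m := by positivity
  set T := {z : ℝ × (Fin m → ℝ) | |z.1| < τ ∧ |z.1| < R * m * ‖z.2‖ ^ 2} with hTdef
  have hT : MeasurableSet T := by
    rw [hTdef, Set.ofPred_and]
    refine MeasurableSet.inter (measurableSet_lt ?_ ?_) (measurableSet_lt ?_ ?_) <;> fun_prop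
  calc ∫⁻ y in S, ENNReal.ofReal (‖y‖ ^ (-(((m + 1 : ℕ) : ℝ) + 2 * s)))
      = ∫⁻ y, S.indicator
          (fun y => ENNReal.ofReal (‖y‖ ^ (-(((m + 1 : ℕ) : ℝ) + 2 * s)))) y :=
        (lintegral_indicator hS _).symm
    _ ≤ ∫⁻ y, T.indicator (fun z => ENNReal.ofReal (‖z.2‖ ^ (-((m : ℝ) + q)))) (e y) := by
        refine lintegral_mono fun y => ?_
        by_cases hy : y ∈ S
        · obtain ⟨h1, h2⟩ := norm_compare y
          have hlt : |y (Fin.last m)| < R * m * ‖fun j : Fin m => y j.castSucc‖ ^ 2 := by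
            refine hy.2.trans_le ?_
            rw [mul_assoc]
            exact mul_le_mul_of_nonneg_left h2 hR.le
          have hyT : e y ∈ T := by
            refine ⟨by rw [he1]; exact hy.1, ?_⟩
            rw [he1, he2]; exact hlt
          -- The strict inequality defining the region excludes `y' = 0`, where the power is junk.
          have hpos : 0 < ‖fun j : Fin m => y j.castSucc‖ := by
            refine (norm_nonneg _).lt_of_ne fun h0 => ?_
            rw [← h0] at hlt
            have := abs_nonneg (y (Fin.last m))
            norm_num at hlt
            linarith
          rw [indicator_of_mem hy, indicator_of_mem hyT, he2]
          refine ENNReal.ofReal_le_ofReal ?_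
          rw [show -(((m + 1 : ℕ) : ℝ) + 2 * s) = -((m : ℝ) + q) by rw [hq]; push_cast; ring]
          exact Real.rpow_le_rpow_of_nonpos hpos h1 (by linarith)
        · rw [indicator_of_notMem hy]; exact zero_le
    _ = ∫⁻ z, T.indicator (fun z => ENNReal.ofReal (‖z.2‖ ^ (-((m : ℝ) + q)))) z :=
        he.lintegral_comp (Measurable.indicator (by fun_prop) hT)
    _ = _ := lintegral_prod_region hm hq0 (by linarith) hmR hτ
    _ = _ := by
        rw [Real.mul_rpow hR.le hm0.le, show (1 - 2 * s) / 2 = 1 - q / 2 by rw [hq]; ring]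
        congr 1
        ring
end

section
/- Let n ≥ 2 and s ∈ (0,1/2), and let x ∈ Q_ρ. Then the two quantities κ⁺[x,d] = ∫_{{z ∈ ℝⁿ : d(x+z) > d(x), ∇d(x)·z < 0}} |z|^{-(n+2s)} dz and κ⁻[x,d] = ∫_{{z ∈ ℝⁿ : d(x+z) < d(x), ∇d(x)·z > 0}} |z|^{-(n+2s)} dz are finite. -/
/-!
Away from the origin the kernel `‖z‖ ^ (-(n + 2s))` is integrable because `n + 2s > n`
(`integrableOn_norm_rpow_outside`). Near the origin, a second order Taylor estimate for `d` at `x`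
(`exists_taylor_bound`) shows that both sets lie in the thin region `|⟪g, z⟫| ≤ C ‖z‖²`,
where `g = ∇d(x)` is a unit vector.

On this region, take an orthonormal basis whose first vector is `g` and let `zᵢ` be the
coordinates of `z`. Bounding one coordinate by `C ‖z‖²` and the others by `‖z‖` gives
`∏ |zᵢ| ≤ C ‖z‖ ^ (n + 1)`. With `b = (n + 2s) / (n + 1)` this reads
`‖z‖ ^ (-(n + 2s)) ≤ C ^ b ∏ |zᵢ| ^ (-b)`, and the right-hand side is integrable on bounded boxes
because `2s < 1` means `b < 1` (`integrableOn_thin_region`).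

The set `{|d| < 2ρ}` is open since `∇d ≠ 0` there forces `d` to be differentiable,
hence continuous, at each of its points; so `d` is smooth in a neighbourhood of `x`.
-/

open MeasureTheory Real Set Filter Metric
open scoped Topology RealInnerProductSpace

theorem integrableOn_abs_rpow_Icc {b : ℝ} (hb : b < 1) (δ : ℝ) :
    IntegrableOn (fun t : ℝ => |t| ^ (-b)) (Icc (-δ) δ) := by
  have h : LocallyIntegrable (fun t : ℝ => |t| ^ (-b)) := by
    refine locallyIntegrable_of_norm_le_rpow (μ := volume) (C := 1) (α := b) (by simp)
      (by simpa using hb) (ae_of_all _ fun t => ?_)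
      (measurable_norm.pow_const (-b)).aestronglyMeasurable
    rw [Real.norm_eq_abs, abs_of_nonneg (by positivity), one_mul, Real.norm_eq_abs]
  exact h.integrableOn_isCompact isCompact_Icc

theorem integrableOn_prod_abs_rpow {n : ℕ} {b : ℝ} (hb : b < 1) (δ : ℝ) :
    IntegrableOn (fun w : Fin n → ℝ => ∏ i, |w i| ^ (-b))
      (Set.pi univ fun _ => Icc (-δ) δ) := by
  rw [IntegrableOn, volume_pi, Measure.restrict_pi_pi]
  exact Integrable.fintype_prod (f := fun _ (t : ℝ) => |t| ^ (-b))
    fun _ => integrableOn_abs_rpow_Icc hb δ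

theorem integrableOn_norm_rpow_outside {n : ℕ} {r δ : ℝ} (hr : (n : ℝ) < r) (hδ : 0 < δ) :
    IntegrableOn (fun z : EuclideanSpace ℝ (Fin n) => ‖z‖ ^ (-r)) {z | δ ≤ ‖z‖} := by
  have h0 : 0 < r := lt_of_le_of_lt (Nat.cast_nonneg n) hr
  have h : Integrable (fun z : EuclideanSpace ℝ (Fin n) => (1 + ‖z‖) ^ (-r)) :=
    integrable_one_add_norm (by simpa using hr)
  have hm : MeasurableSet {z : EuclideanSpace ℝ (Fin n) | δ ≤ ‖z‖} :=
    measurableSet_le measurable_const measurable_norm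
  refine Integrable.mono' (h.const_mul ((δ / (1 + δ)) ^ (-r))).integrableOn
    (measurable_norm.pow_const _).aestronglyMeasurable ?_
  filter_upwards [ae_restrict_mem hm] with z hz
  have hz : δ ≤ ‖z‖ := hz
  have hz0 : 0 < ‖z‖ := hδ.trans_le hz
  rw [Real.norm_of_nonneg (by positivity), ← Real.mul_rpow (by positivity) (by positivity)]
  refine Real.rpow_le_rpow_of_nonpos (by positivity) ?_ (by linarith)
  rw [div_mul_eq_mul_div, div_le_iff₀ (by positivity)]
  nlinarith

/-- The pointwise comparison on the thin region, in coordinates: `N` plays the role of `‖z‖`. -/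
theorem rpow_neg_le_prod {n : ℕ} {s C N : ℝ} (hs : 0 < s) (hC : 0 < C) (w : Fin n → ℝ)
    (hw : ∀ i, w i ≠ 0) (hN : 0 < N) (hwN : ∀ i, |w i| ≤ N) (i₀ : Fin n)
    (h₀ : |w i₀| ≤ C * N ^ 2) :
    N ^ (-((n : ℝ) + 2 * s)) ≤
      C ^ (((n : ℝ) + 2 * s) / (n + 1)) * ∏ i, |w i| ^ (-(((n : ℝ) + 2 * s) / (n + 1))) := by
  set b : ℝ := ((n : ℝ) + 2 * s) / (n + 1) with hb
  have hb0 : 0 < b := by positivity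
  have hn : 1 ≤ n := by have := i₀.2; omega
  have hP : 0 < ∏ i, |w i| := Finset.prod_pos fun i _ => abs_pos.2 (hw i)
  have key : ∏ i, |w i| ≤ C * N ^ (n + 1) := by
    rw [← Finset.mul_prod_erase _ _ (Finset.mem_univ i₀)]
    calc |w i₀| * ∏ i ∈ Finset.univ.erase i₀, |w i|
        ≤ (C * N ^ 2) * ∏ _i ∈ Finset.univ.erase i₀, N := by
          gcongr with i
          exact hwN i
      _ = C * N ^ (n + 1) := by
          rw [Finset.prod_const, Finset.card_erase_of_mem (Finset.mem_univ _), Finset.card_univ,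
            Fintype.card_fin, mul_assoc, ← pow_add]
          congr 2
          omega
  have hexp : (N ^ (n + 1)) ^ (-b) = N ^ (-((n : ℝ) + 2 * s)) := by
    rw [← Real.rpow_natCast, ← Real.rpow_mul hN.le]
    congr 1
    rw [hb]
    push_cast
    field_simp
  have h1 : (C * N ^ (n + 1)) ^ (-b) ≤ (∏ i, |w i|) ^ (-b) :=
    Real.rpow_le_rpow_of_nonpos hP key (by linarith)
  rw [Real.mul_rpow hC.le (by positivity), hexp, Real.rpow_neg hC.le,
    ← Real.finsetProd_rpow _ _ fun i _ => abs_nonneg _] at h1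
  rwa [inv_mul_le_iff₀ (by positivity)] at h1

/-- The kernel is integrable near the origin in a region pinched quadratically around the
hyperplane orthogonal to `g`; this is where `s < 1/2` is needed. -/
theorem integrableOn_thin_region {n : ℕ} (hn : 1 ≤ n) {s C δ : ℝ} (hs : 0 < s) (hs' : s < 1 / 2)
    (hC : 0 < C) (g : EuclideanSpace ℝ (Fin n)) (hg : ‖g‖ = 1) :
    IntegrableOn (fun z : EuclideanSpace ℝ (Fin n) => ‖z‖ ^ (-((n : ℝ) + 2 * s)))
      {z | ‖z‖ ≤ δ ∧ |⟪g, z⟫| ≤ C * ‖z‖ ^ 2} := by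
  let i₀ : Fin n := ⟨0, hn⟩
  obtain ⟨B, hB⟩ : ∃ B : OrthonormalBasis (Fin n) ℝ (EuclideanSpace ℝ (Fin n)), B i₀ = g := by
    have ho : Orthonormal ℝ (({i₀} : Set (Fin n)).domRestrict fun _ => g) := by
      refine ⟨fun _ => hg, fun i j hij => (hij (Subsingleton.elim i j)).elim⟩
    obtain ⟨B, hB⟩ := ho.exists_orthonormalBasis_extension_of_card_eq (by simp)
    exact ⟨B, hB i₀ rfl⟩
  let e : EuclideanSpace ℝ (Fin n) ≃ᵐ (Fin n → ℝ) :=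
    B.measurableEquiv.trans (MeasurableEquiv.toLp 2 (Fin n → ℝ)).symm
  have he : MeasurePreserving e :=
    (PiLp.volume_preserving_ofLp (Fin n)).comp B.measurePreserving_measurableEquiv
  have hei : ∀ z i, e z i = ⟪B i, z⟫ := fun z i => B.repr_apply_apply z i
  set b : ℝ := ((n : ℝ) + 2 * s) / (n + 1) with hb
  have hb1 : b < 1 := by
    rw [hb, div_lt_one (by positivity)]
    linarith
  have hle : ∀ z i, |e z i| ≤ ‖z‖ := fun z i => by
    rw [hei]
    simpa using abs_real_inner_le_norm (B i) z
  have hint : IntegrableOn (fun z => C ^ b * ∏ i, |e z i| ^ (-b))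
      (e ⁻¹' (Set.pi univ fun _ => Icc (-δ) δ)) :=
    ((he.integrableOn_comp_preimage e.measurableEmbedding).2
      (integrableOn_prod_abs_rpow hb1 δ)).const_mul _
  have hne : ∀ᵐ z : EuclideanSpace ℝ (Fin n), ∀ i, e z i ≠ 0 := by
    refine he.quasiMeasurePreserving.ae (p := fun w => ∀ i, w i ≠ 0) ?_
    refine ae_all_iff.2 fun i => ?_
    exact (Measure.quasiMeasurePreserving_eval (fun _ : Fin n => (volume : Measure ℝ)) i).ae
      (p := fun t => t ≠ 0) (Measure.ae_ne volume 0)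
  have hm : MeasurableSet {z : EuclideanSpace ℝ (Fin n) | ‖z‖ ≤ δ ∧ |⟪g, z⟫| ≤ C * ‖z‖ ^ 2} := by
    refine (measurableSet_le measurable_norm measurable_const).inter
      (measurableSet_le (f := fun z => |⟪g, z⟫|) (g := fun z => C * ‖z‖ ^ 2) ?_ ?_) <;> fun_prop
  refine Integrable.mono' (hint.mono_set ?_)
    (measurable_norm.pow_const _).aestronglyMeasurable ?_
  · rintro z ⟨hz, -⟩ i -
    exact abs_le.1 ((hle z i).trans hz)
  filter_upwards [ae_restrict_mem hm, ae_restrict_of_ae hne] with z hz hz0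
  have hN : 0 < ‖z‖ := (abs_pos.2 (hz0 i₀)).trans_le (hle z i₀)
  rw [Real.norm_of_nonneg (by positivity)]
  refine rpow_neg_le_prod hs hC (e z) hz0 hN (hle z) i₀ ?_
  rw [hei, hB]
  exact hz.2

/-- A `C²` function has a Lipschitz derivative near `x`, so the mean value inequality on
`closedBall x ‖z‖` gives a quadratic remainder. -/
theorem exists_taylor_bound {E : Type*} [NormedAddCommGroup E] [InnerProductSpace ℝ E]
    [CompleteSpace E] {d : E → ℝ} {x : E} (h : ContDiffAt ℝ 2 d x) :
    ∃ C > 0, ∃ δ > 0, ∀ z, ‖z‖ ≤ δ → |d (x + z) - d x - ⟪gradient d x, z⟫| ≤ C * ‖z‖ ^ 2 := by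
  have h1 : ContDiffAt ℝ 1 (fderiv ℝ d) x := h.fderiv_right (by norm_num)
  obtain ⟨K, t, ht, hK⟩ := h1.exists_lipschitzOnWith
  have hdiff : ∀ᶠ y in 𝓝 x, DifferentiableAt ℝ d y :=
    (h.eventually (by simp)).mono fun y hy => hy.differentiableAt (by norm_num)
  obtain ⟨δ, hδ, hball⟩ := Metric.nhds_basis_closedBall.mem_iff.1 (inter_mem ht hdiff)
  refine ⟨K + 1, by positivity, δ, hδ, fun z hz => ?_⟩
  have hsub : closedBall x ‖z‖ ⊆ closedBall x δ := closedBall_subset_closedBall hz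
  have hxt : x ∈ t := (hball (mem_closedBall_self hδ.le)).1
  have := (convex_closedBall x ‖z‖).norm_image_sub_le_of_norm_hasFDerivWithin_le'
    (f := d) (f' := fderiv ℝ d) (φ := fderiv ℝ d x) (C := K * ‖z‖)
    (fun y hy => (hball (hsub hy)).2.hasFDerivAt.hasFDerivWithinAt)
    (fun y hy => by
      refine (hK.norm_sub_le (hball (hsub hy)).1 hxt).trans ?_
      gcongr
      simpa [dist_eq_norm] using hy)
    (mem_closedBall_self (norm_nonneg z)) (y := x + z) (by simp)
  rw [add_sub_cancel_left, Real.norm_eq_abs] at this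
  have hgz : ⟪gradient d x, z⟫ = fderiv ℝ d x z := by
    simp [gradient]
  rw [hgz]
  nlinarith [sq_nonneg ‖z‖]

theorem fractional_mean_curvature_finite
    (n : ℕ) (hn : 2 ≤ n) (s : ℝ) (hs : s ∈ Set.Ioo (0 : ℝ) (1/2))
    (Ω : Set (EuclideanSpace ℝ (Fin n))) (hΩopen : IsOpen Ω) (hΩconn : IsConnected Ω)
    (d : EuclideanSpace ℝ (Fin n) → ℝ)
    (hd : ∀ x : EuclideanSpace ℝ (Fin n),
      (x ∈ Ω → d x = Metric.infDist x (frontier Ω)) ∧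
      (x ∉ Ω → d x = -Metric.infDist x (frontier Ω)))
    (ρ : ℝ) (hρ : 0 < ρ)
    (hsmooth : ContDiffOn ℝ (⊤ : ℕ∞) d {x : EuclideanSpace ℝ (Fin n) | |d x| < 2 * ρ})
    (hgrad : ∀ x ∈ {x : EuclideanSpace ℝ (Fin n) | |d x| < 2 * ρ}, ‖gradient d x‖ = 1) :
    ∀ x ∈ {x : EuclideanSpace ℝ (Fin n) | |d x| < ρ},
      IntegrableOn (fun z : EuclideanSpace ℝ (Fin n) => ‖z‖ ^ (-((n : ℝ) + 2*s)))
        {z : EuclideanSpace ℝ (Fin n) | d x < d (x + z) ∧ ⟪gradient d x, z⟫ < 0} ∧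
      IntegrableOn (fun z : EuclideanSpace ℝ (Fin n) => ‖z‖ ^ (-((n : ℝ) + 2*s)))
        {z : EuclideanSpace ℝ (Fin n) | d (x + z) < d x ∧ 0 < ⟪gradient d x, z⟫} := by
  intro x hx
  have hx2 : |d x| < 2 * ρ := lt_trans hx (by linarith)
  have hg := hgrad x hx2
  -- A nonzero gradient is not a junk value, so `d` is differentiable and hence continuous at `x`.
  have hdiff : DifferentiableAt ℝ d x := by
    by_contra hnd
    rw [gradient_eq_zero_of_not_differentiableAt hnd, norm_zero] at hg
    exact zero_ne_one hg
  have hnhds : {y : EuclideanSpace ℝ (Fin n) | |d y| < 2 * ρ} ∈ 𝓝 x :=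
    hdiff.continuousAt.abs.eventually_lt continuousAt_const hx2
  have hC2 : ContDiffAt ℝ 2 d x :=
    (hsmooth.contDiffAt hnhds).of_le (WithTop.coe_le_coe.2 (le_top : (2 : ℕ∞) ≤ ⊤))
  obtain ⟨C, hC, δ, hδ, hT⟩ := exists_taylor_bound hC2
  have hU := (integrableOn_thin_region (by omega : 1 ≤ n) (δ := δ) hs.1 hs.2 hC _ hg).union
    (integrableOn_norm_rpow_outside (n := n) (r := (n : ℝ) + 2 * s) (by linarith [hs.1]) hδ)
  constructor <;>
  · refine hU.mono_set ?_
    rintro z ⟨h1, h2⟩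
    rcases le_total δ ‖z‖ with h | h
    · exact Or.inr h
    · have := abs_le.1 (hT z h)
      exact Or.inl ⟨h, abs_le.2 ⟨by linarith, by linarith⟩⟩
end
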